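/- For every bounded invertible Mealy automaton A over X there exist a finite set Q, a transition function δ : Q × X → Q, an initial state q₀ ∈ Q, and a set F ⊆ Q of accepting states, such that for every right-infinite sequence w = w₁w₂w₃… ∈ X^ω the following holds: the orbit of w under G_A is finite if and only if the run of the machine on w (the sequence of states q₀, δ(q₀, w₁), δ(δ(q₀, w₁), w₂), …) visits accepting states only finitely often. -/

import Mathlib

/-- A Mealy automaton over alphabet `X` with state set `S`:
the transition-output function sends `(s, x)` to `(output letter, next state)`. -/
structure Mealy (S X : Type*) where
  step : S → X → X × S

namespace Mealy

variable {S X : Type*}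

/-- The section `s|_v`: the state reached after processing the word `v` from state `s`. -/
def sec (A : Mealy S X) (s : S) : List X → S
  | [] => s
  | x :: v => A.sec (A.step s x).2 v

/-- The action of a state on finite words (lists of letters, read left to right). -/
def act (A : Mealy S X) (s : S) : List X → List X
  | [] => []
  | x :: v => (A.step s x).1 :: A.act (A.step s x).2 v

/-- A state is trivial if it acts on `X^*` as the identity. -/
def IsTrivialState (A : Mealy S X) (s : S) : Prop := ∀ v : List X, A.act s v = v

/-- An automaton is invertible if every state acts on the letters by a permutation. -/
def Invertible (A : Mealy S X) : Prop :=
  ∀ s : S, Function.Bijective fun x : X => (A.step s x).1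

/-- The automaton group `G_A`: the subgroup of permutations of `X^*` generated by
the permutations defined by the states of `A`. -/
def autGroup (A : Mealy S X) : Subgroup (Equiv.Perm (List X)) :=
  Subgroup.closure { f : Equiv.Perm (List X) | ∃ s : S, ∀ v : List X, f v = A.act s v }

/-- A left-infinite sequence `…x₂x₁` is encoded as `p : ℕ → X` with `p 0 = x₁`, `p 1 = x₂`, ….
It is post-critical if it is the sequence of input labels or of output labels of a
left-infinite directed path in `A` ending at a non-trivial state. -/
def IsPostCritical (A : Mealy S X) (p : ℕ → X) : Prop :=
  ∃ (σ : ℕ → S) (inp out : ℕ → X),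
    (∀ n, A.step (σ (n + 1)) (inp n) = (out n, σ n)) ∧
      ¬A.IsTrivialState (σ 0) ∧ (p = inp ∨ p = out)

/-- The post-critical set of `A`. -/
def PostCriticalSet (A : Mealy S X) : Set (ℕ → X) := { p | A.IsPostCritical p }

/-- An automaton is bounded if its post-critical set is finite. -/
def Bounded (A : Mealy S X) : Prop := A.PostCriticalSet.Finite

/-- The length-`n` suffix (as a finite word, read left to right) of a left-infinite
sequence `…x₂x₁` encoded as `p : ℕ → X`: the word `xₙ…x₂x₁`. -/
def lsuffix (p : ℕ → X) (n : ℕ) : List X := (List.range n).reverse.map p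

/-- A finite word is post-critical if it is a suffix of some post-critical sequence. -/
def IsPostCriticalWord (A : Mealy S X) (v : List X) : Prop :=
  ∃ p : ℕ → X, A.IsPostCritical p ∧ v = lsuffix p v.length

/-- The base relation for `e`-equivalence: `v ≈ u` if some state `s` satisfies
`s|_v` trivial and `s(v) = u`, or `s|_u` trivial and `s(u) = v`. -/
def ERel (A : Mealy S X) (v u : List X) : Prop :=
  ∃ s : S, (A.IsTrivialState (A.sec s v) ∧ A.act s v = u) ∨
    (A.IsTrivialState (A.sec s u) ∧ A.act s u = v)

/-- `e`-equivalence: the equivalence relation generated by `≈`. -/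
def EEquiv (A : Mealy S X) : List X → List X → Prop := Relation.EqvGen A.ERel

/-- The `e`-orbit of a word. -/
def eOrbit (A : Mealy S X) (v : List X) : Set (List X) := { u | A.EEquiv v u }

/-- The orbit of a finite word under the automaton group. -/
def orbit (A : Mealy S X) (v : List X) : Set (List X) := { u | ∃ g ∈ A.autGroup, g v = u }

/-- Reachability by a directed path in the automaton. -/
def Reaches (A : Mealy S X) : S → S → Prop :=
  Relation.ReflTransGen fun a b => ∃ x : X, (A.step a x).2 = b

/-- The states of the circuit part `C(A)`: states reachable by a directed path
from some directed cycle of `A`. -/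
def circuitStates (A : Mealy S X) : Set S :=
  { s | ∃ t : S, (∃ x : X, A.Reaches (A.step t x).2 t) ∧ A.Reaches t s }

/-- The circuit part `C(A)` as a subautomaton. -/
def circuitPart (A : Mealy S X) : Mealy A.circuitStates X where
  step s x :=
    ((A.step s.1 x).1,
      ⟨(A.step s.1 x).2, by
        obtain ⟨t, hc, hr⟩ := s.2
        exact ⟨t, hc, hr.tail ⟨x, rfl⟩⟩⟩)

/-- The subautomaton induced on a subset of states closed under transitions. -/
def subautomaton (A : Mealy S X) (T : Set S)
    (hT : ∀ s ∈ T, ∀ x : X, (A.step s x).2 ∈ T) : Mealy T X where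
  step s x := ((A.step s.1 x).1, ⟨(A.step s.1 x).2, hT s.1 s.2 x⟩)

/-- The extension of a length- and prefix-preserving map on finite words to
right-infinite sequences (letter by letter). -/
def extOmega (f : List X → List X) (w : ℕ → X) : ℕ → X :=
  fun n => (f ((List.range (n + 1)).map w)).getD n (w n)

/-- The orbit of a right-infinite sequence under the automaton group. -/
def orbitOmega (A : Mealy S X) (w : ℕ → X) : Set (ℕ → X) :=
  { w' | ∃ g ∈ A.autGroup, w' = extOmega (⇑(g : Equiv.Perm (List X))) w }

/-- The group `G_A` is level-transitive if it acts transitively on each level `X^n`. -/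
def LevelTransitive (A : Mealy S X) : Prop :=
  ∀ v u : List X, v.length = u.length → ∃ g ∈ A.autGroup, g v = u

end Mealy

/-- The run of a deterministic finite-state machine on a right-infinite input:
`dfaRun δ q₀ w n` is the state after reading the first `n` letters. -/
def dfaRun {Q X : Type*} (δ : Q → X → Q) (q₀ : Q) (w : ℕ → X) : ℕ → Q
  | 0 => q₀
  | n + 1 => δ (dfaRun δ q₀ w n) (w n)

/-- A concrete encoding of an invertible Mealy automaton (with state set `Fin n`
over alphabet `Fin k`) as a natural number. -/
def encodeAut (n k : ℕ) (step : Fin n → Fin k → Fin k × Fin n) : ℕ :=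
  Nat.pair n (Nat.pair k (Encodable.encode
    ((List.finRange n).flatMap fun s =>
      (List.finRange k).map fun x =>
        Nat.pair ((step s x).1 : ℕ) ((step s x).2 : ℕ))))

/-!
A bounded automaton has, on every level, a bounded number of pairs `(s, u)` with `s|_u` non-trivial:
such a word `u`, up to a prefix of bounded length, is a suffix of one of the finitely many
post-critical sequences. A word in the orbit of `v` can therefore be reached from `v` by a path
of the Schreier graph that meets a bounded number of non-trivial sections, and
Schreier's argument shows that the sections at `v` of the stabilizer of `v` form a group generated
by elements of bounded word length. So only finitely many groups arise in this way. The group at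
`vx` depends only on the group at `v` and on the letter `x`, so that these groups are the states of
a finite automaton, and the orbit of `w` is finite iff only finitely often the group at a prefix of
`w` moves the next letter of `w`.
-/

open Equiv (Perm)
open scoped Pointwise

section TreeAutomorphisms

variable {X : Type*}

variable (X) in
/-- The automorphism group of the rooted tree `X^*`. Commuting with truncation encodes both the
preservation of prefixes and that of lengths. -/
def treeAut : Subgroup (Perm (List X)) where
  carrier := {g | ∀ (v : List X) (n : ℕ), g (v.take n) = (g v).take n}
  one_mem' _ _ := rfl
  mul_mem' ha hb v n := by simp only [Perm.mul_apply, hb v n, ha (_) n]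
  inv_mem' {a} ha v n := by rw [Perm.inv_eq_iff_eq, ha]; simp

theorem treeAut.map_take {g : Perm (List X)} (hg : g ∈ treeAut X) (v : List X) (n : ℕ) :
    g (v.take n) = (g v).take n :=
  hg v n

theorem treeAut.length_map {g : Perm (List X)} (hg : g ∈ treeAut X) (v : List X) :
    (g v).length = v.length := by
  have length_le {a : Perm (List X)} (ha : a ∈ treeAut X) (u : List X) :
      (a u).length ≤ u.length := by
    have h := ha u u.length
    rw [List.take_length] at h
    exact List.take_eq_self_iff _ |>.1 h.symm
  refine (length_le hg v).antisymm ?_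
  simpa using length_le (inv_mem hg) (g v)

/-- `IsSectionAt g u h` says that `h` is the section `g|_u` of `g` at the word `u`. -/
def IsSectionAt (g : Perm (List X)) (u : List X) (h : Perm (List X)) : Prop :=
  ∀ z, g (u ++ z) = g u ++ h z

namespace IsSectionAt

variable {g g' h h' : Perm (List X)} {u v : List X}

theorem one (u : List X) : IsSectionAt 1 u 1 := fun _ => rfl

theorem unique (hh : IsSectionAt g u h) (hh' : IsSectionAt g u h') : h = h' :=
  Equiv.ext fun z => List.append_cancel_left ((hh z).symm.trans (hh' z))

theorem mul (hg : IsSectionAt g (g' u) h) (hg' : IsSectionAt g' u h') :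
    IsSectionAt (g * g') u (h * h') := fun z => by
  simp only [Perm.mul_apply, hg' z, hg (h' z)]

theorem inv (hg : IsSectionAt g u h) : IsSectionAt g⁻¹ (g u) h⁻¹ := fun z => by
  rw [Perm.inv_eq_iff_eq, Perm.coe_inv, Equiv.symm_apply_apply, hg, Perm.coe_inv,
    Equiv.apply_symm_apply]

end IsSectionAt

theorem treeAut.exists_isSectionAt {g : Perm (List X)} (hg : g ∈ treeAut X) (u : List X) :
    ∃ h, IsSectionAt g u h := by
  have append_drop {a : Perm (List X)} (ha : a ∈ treeAut X) (w z : List X) :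
      a w ++ (a (w ++ z)).drop w.length = a (w ++ z) := by
    conv_rhs => rw [← List.take_append_drop w.length (a (w ++ z)), ← map_take ha]
    rw [List.take_left]
  refine ⟨⟨fun z => (g (u ++ z)).drop u.length, fun z => (g.symm (g u ++ z)).drop (g u).length,
    fun z => ?_, fun z => ?_⟩, fun z => (append_drop hg u z).symm⟩
  · simp only [append_drop hg, Equiv.symm_apply_apply, length_map hg, List.drop_left]
  · have h := append_drop (inv_mem hg) (g u) z
    rw [Perm.coe_inv, Equiv.symm_apply_apply] at h
    simp only [h, Equiv.apply_symm_apply]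
    rw [← length_map hg, List.drop_left]

/-- The sections at `v` of the elements of `G` fixing `v`: the action of the stabilizer of `v` on
the subtree below `v`. -/
def stabilizerSections (G : Subgroup (Perm (List X))) (v : List X) : Subgroup (Perm (List X)) where
  carrier := {h | ∃ g ∈ G, g v = v ∧ IsSectionAt g v h}
  one_mem' := ⟨1, one_mem G, rfl, .one v⟩
  mul_mem' := by
    rintro h h' ⟨g, hg, hgv, hs⟩ ⟨g', hg', hgv', hs'⟩
    exact ⟨g * g', mul_mem hg hg', by rw [Perm.mul_apply, hgv', hgv], .mul (by rwa [hgv']) hs'⟩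
  inv_mem' := by
    rintro h ⟨g, hg, hgv, hs⟩
    exact ⟨g⁻¹, inv_mem hg, by rw [Perm.inv_eq_iff_eq, hgv], by simpa only [hgv] using hs.inv⟩

theorem stabilizerSections_append {G : Subgroup (Perm (List X))} (hG : G ≤ treeAut X)
    (u v : List X) :
    stabilizerSections G (u ++ v) = stabilizerSections (stabilizerSections G u) v := by
  ext h
  constructor
  · rintro ⟨g, hg, hguv, hh⟩
    obtain ⟨k, hk⟩ := treeAut.exists_isSectionAt (hG hg) u
    obtain ⟨hgu, hkv⟩ := List.append_inj ((hk v).symm.trans hguv) (treeAut.length_map (hG hg) u)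
    refine ⟨k, ⟨g, hg, hgu, hk⟩, hkv, fun z => List.append_cancel_left (as := g u) ?_⟩
    rw [← hk, ← List.append_assoc u, hh, hk, List.append_assoc]
  · rintro ⟨k, ⟨g, hg, hgu, hk⟩, hkv, hh⟩
    refine ⟨g, hg, by rw [hk, hgu, hkv], fun z => ?_⟩
    rw [List.append_assoc, hk, hh, hk, List.append_assoc]

end TreeAutomorphisms

section InfiniteWords

variable {X : Type*} {G : Subgroup (Perm (List X))}

/-- The prefix `w₁…wₙ` of a right-infinite sequence `w`, encoded with `w 0 = w₁`. -/
def wordPrefix (w : ℕ → X) (n : ℕ) : List X := (List.range n).map w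

theorem length_wordPrefix (w : ℕ → X) (n : ℕ) : (wordPrefix w n).length = n := by
  simp [wordPrefix]

theorem wordPrefix_succ (w : ℕ → X) (n : ℕ) : wordPrefix w (n + 1) = wordPrefix w n ++ [w n] := by
  simp [wordPrefix, List.range_succ]

theorem take_wordPrefix (w : ℕ → X) {m n : ℕ} (hmn : m ≤ n) :
    (wordPrefix w n).take m = wordPrefix w m := by
  simp [wordPrefix, ← List.map_take, List.take_range, hmn]

theorem wordPrefix_injective : Function.Injective (wordPrefix (X := X)) := fun w w' h => by
  funext n
  have hn := congrFun h (n + 1)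
  rw [wordPrefix_succ, wordPrefix_succ, congrFun h n] at hn
  simpa using hn

theorem wordPrefix_extOmega {g : Perm (List X)} (hg : g ∈ treeAut X) (w : ℕ → X) (n : ℕ) :
    wordPrefix (Mealy.extOmega g w) n = g (wordPrefix w n) := by
  have hlen : (g (wordPrefix w n)).length = n := by
    rw [treeAut.length_map hg, length_wordPrefix]
  refine List.ext_getElem (by rw [length_wordPrefix, hlen]) fun i hi _ => ?_
  rw [length_wordPrefix] at hi
  have htake : g (wordPrefix w (i + 1)) = (g (wordPrefix w n)).take (i + 1) := by
    rw [← take_wordPrefix w hi, treeAut.map_take hg]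
  calc (wordPrefix (Mealy.extOmega g w) n)[i]
      = (g (wordPrefix w (i + 1))).getD i (w i) := by simp [wordPrefix, Mealy.extOmega]
    _ = (g (wordPrefix w n))[i] := by
      rw [htake, List.getD_eq_getElem _ _ (by simp; omega), List.getElem_take]

theorem treeAut.map_wordPrefix_eq_of_le {a b : Perm (List X)} (ha : a ∈ treeAut X)
    (hb : b ∈ treeAut X) {w : ℕ → X} {m n : ℕ} (hmn : m ≤ n)
    (h : a (wordPrefix w n) = b (wordPrefix w n)) : a (wordPrefix w m) = b (wordPrefix w m) := by
  rw [← take_wordPrefix w hmn, map_take ha, map_take hb, h]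

/-- `G` branches at position `n` of `w` if the stabilizer of the prefix of length `n` is strictly
larger than that of the prefix of length `n + 1`. -/
def BranchesAt (G : Subgroup (Perm (List X))) (w : ℕ → X) (n : ℕ) : Prop :=
  ∃ g ∈ G, g (wordPrefix w n) = wordPrefix w n ∧ g (wordPrefix w (n + 1)) ≠ wordPrefix w (n + 1)

theorem branchesAt_iff_stabilizerSections (hG : G ≤ treeAut X) (w : ℕ → X) (n : ℕ) :
    BranchesAt G w n ↔ ∃ h ∈ stabilizerSections G (wordPrefix w n), h [w n] ≠ [w n] := by
  rw [BranchesAt, wordPrefix_succ]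
  constructor
  · rintro ⟨g, hg, hfix, hmove⟩
    obtain ⟨h, hh⟩ := treeAut.exists_isSectionAt (hG hg) (wordPrefix w n)
    exact ⟨h, ⟨g, hg, hfix, hh⟩, by rwa [hh, hfix, Ne, List.append_cancel_left_eq] at hmove⟩
  · rintro ⟨h, ⟨g, hg, hfix, hh⟩, hmove⟩
    exact ⟨g, hg, hfix, by rwa [hh, hfix, Ne, List.append_cancel_left_eq]⟩

theorem injOn_wordPrefix_of_not_branchesAt (hG : G ≤ treeAut X) {w : ℕ → X} {N : ℕ}
    (hN : ∀ n, N ≤ n → ¬BranchesAt G w n) :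
    Set.InjOn (wordPrefix · N) ((fun g : Perm (List X) => Mealy.extOmega g w) '' G) := by
  have fixes_of_le {g : Perm (List X)} (hg : g ∈ G) (hfix : g (wordPrefix w N) = wordPrefix w N) :
      ∀ n, N ≤ n → g (wordPrefix w n) = wordPrefix w n := by
    refine Nat.le_induction hfix fun n hn ih => ?_
    by_contra hmove
    exact hN n hn ⟨g, hg, ih, hmove⟩
  rintro _ ⟨a, ha, rfl⟩ _ ⟨b, hb, rfl⟩ hab
  simp only [wordPrefix_extOmega (hG ha), wordPrefix_extOmega (hG hb)] at hab
  refine wordPrefix_injective (funext fun n => ?_)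
  rw [wordPrefix_extOmega (hG ha), wordPrefix_extOmega (hG hb)]
  refine treeAut.map_wordPrefix_eq_of_le (hG ha) (hG hb) (le_max_right N n) ?_
  rw [← Perm.inv_eq_iff_eq, ← Perm.mul_apply]
  refine fixes_of_le (mul_mem (inv_mem hb) ha) ?_ _ (le_max_left N n)
  rw [Perm.mul_apply, hab, Perm.coe_inv, Equiv.symm_apply_apply]

theorem infinite_image_extOmega_of_branchesAt (hG : G ≤ treeAut X) {w : ℕ → X}
    (hw : {n | BranchesAt G w n}.Infinite) :
    ((fun g : Perm (List X) => Mealy.extOmega g w) '' G).Infinite := by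
  choose! g hg hfix hmove using fun n (hn : n ∈ {n | BranchesAt G w n}) => hn
  have ne_of_lt {n m : ℕ} (hn : BranchesAt G w n) (hm : BranchesAt G w m) (hnm : n < m) :
      Mealy.extOmega (g n) w ≠ Mealy.extOmega (g m) w := fun heq => by
    apply hmove n hn
    calc g n (wordPrefix w (n + 1)) = g m (wordPrefix w (n + 1)) := by
          rw [← wordPrefix_extOmega (hG (hg n hn)), heq, wordPrefix_extOmega (hG (hg m hm))]
      _ = wordPrefix w (n + 1) :=
          treeAut.map_wordPrefix_eq_of_le (hG (hg m hm)) (one_mem _) hnm (hfix m hm)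
  refine Set.infinite_of_injOn_mapsTo (f := fun n => Mealy.extOmega (g n) w)
    (fun n hn m hm heq => ?_) (fun n hn => ⟨g n, hg n hn, rfl⟩) hw
  rcases lt_trichotomy n m with hnm | hnm | hnm
  · exact absurd heq (ne_of_lt hn hm hnm)
  · exact hnm
  · exact absurd heq.symm (ne_of_lt hm hn hnm)

theorem finite_image_extOmega_iff [Finite X] (hG : G ≤ treeAut X) (w : ℕ → X) :
    ((fun g : Perm (List X) => Mealy.extOmega g w) '' G).Finite ↔
      {n | BranchesAt G w n}.Finite := by
  refine ⟨fun hfin => Set.not_infinite.1 fun hinf =>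
    infinite_image_extOmega_of_branchesAt hG hinf hfin, fun hfin => ?_⟩
  obtain ⟨N, hN⟩ := hfin.bddAbove
  exact .of_injOn (t := {u : List X | u.length = N + 1}) (fun w' _ => length_wordPrefix w' (N + 1))
    (injOn_wordPrefix_of_not_branchesAt hG fun n hn hbr => absurd (hN hbr) (by omega))
    (List.finite_length_eq X (N + 1))

end InfiniteWords

section Acceptors

variable {X : Type*}

theorem dfaRun_equiv_conj {Q Q' : Type*} (e : Q ≃ Q') (δ : Q → X → Q) (q₀ : Q) (w : ℕ → X)
    (n : ℕ) : dfaRun (fun q x => e (δ (e.symm q) x)) (e q₀) w n = e (dfaRun δ q₀ w n) := by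
  induction n with
  | zero => rfl
  | succ n ih => simp only [dfaRun, ih, Equiv.symm_apply_apply]

theorem exists_acceptor_of_marked_transitions {α : Type*} [Finite α] (σ : α → X → α) (a₀ : α)
    (marked : α → X → Prop) :
    ∃ (Q : Type) (_ : Fintype Q) (δ : Q → X → Q) (q₀ : Q) (F : Set Q), ∀ w : ℕ → X,
      {n | marked (dfaRun σ a₀ w n) (w n)}.Finite ↔ {n | dfaRun δ q₀ w n ∈ F}.Finite := by
  -- The second component remembers whether the transition taken last was marked.
  let τ : α × Prop → X → α × Prop := fun q x => (σ q.1 x, marked q.1 x)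
  have fst_run (w : ℕ → X) (n : ℕ) : (dfaRun τ (a₀, False) w n).1 = dfaRun σ a₀ w n := by
    induction n with
    | zero => rfl
    | succ n ih => simp only [dfaRun, τ, ih]
  obtain ⟨m, ⟨e⟩⟩ := Finite.exists_equiv_fin (α × Prop)
  refine ⟨Fin m, inferInstance, fun q x => e (τ (e.symm q) x), e (a₀, False),
    {q | (e.symm q).2}, fun w => ?_⟩
  have hvisits : {n | dfaRun (fun q x => e (τ (e.symm q) x)) (e (a₀, False)) w n ∈
      {q | (e.symm q).2}} = Nat.succ '' {n | marked (dfaRun σ a₀ w n) (w n)} := by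
    ext n
    rw [Set.mem_ofPred_eq, Set.mem_ofPred_eq, dfaRun_equiv_conj, Equiv.symm_apply_apply]
    cases n with
    | zero => simp [dfaRun]
    | succ n => simp [dfaRun, τ, fst_run]
  rw [hvisits, Set.finite_image_iff Nat.succ_injective.injOn]

theorem exists_acceptor_of_finite_range_stabilizerSections {G : Subgroup (Perm (List X))}
    (hG : G ≤ treeAut X) (hfin : (Set.range (stabilizerSections G)).Finite) :
    ∃ (Q : Type) (_ : Fintype Q) (δ : Q → X → Q) (q₀ : Q) (F : Set Q), ∀ w : ℕ → X,
      {n | BranchesAt G w n}.Finite ↔ {n | dfaRun δ q₀ w n ∈ F}.Finite := by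
  have : Finite (Set.range (stabilizerSections G)) := hfin
  let σ : Set.range (stabilizerSections G) → X → Set.range (stabilizerSections G) := fun H x =>
    ⟨stabilizerSections H.1 [x], by
      obtain ⟨_, v, rfl⟩ := H
      exact ⟨v ++ [x], stabilizerSections_append hG v [x]⟩⟩
  let H₀ : Set.range (stabilizerSections G) := ⟨stabilizerSections G [], [], rfl⟩
  have run_eq (w : ℕ → X) (n : ℕ) :
      (dfaRun σ H₀ w n).1 = stabilizerSections G (wordPrefix w n) := by
    induction n with
    | zero => rfl
    | succ n ih => simp only [dfaRun, σ, ih, wordPrefix_succ, stabilizerSections_append hG]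
  simp only [branchesAt_iff_stabilizerSections hG, ← run_eq]
  exact exists_acceptor_of_marked_transitions σ H₀ fun H x => ∃ h ∈ H.1, h [x] ≠ [x]

end Acceptors

section SelfSimilar

variable {X : Type*}

/-- A set of tree automorphisms that contains the identity and is closed under inverses and
sections, such as the states of an automaton with their inverses and a trivial state. -/
structure IsSelfSimilar (P : Set (Perm (List X))) : Prop where
  protected one_mem : 1 ∈ P
  protected inv_mem : ∀ g ∈ P, g⁻¹ ∈ P
  subset_treeAut : P ⊆ treeAut X
  section_mem : ∀ g ∈ P, ∀ u h, IsSectionAt g u h → h ∈ P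

/-- The words of length `n` at which some element of `P` has a non-trivial section. -/
def activeWords (P : Set (Perm (List X))) (n : ℕ) : Set (List X) :=
  {u | u.length = n ∧ ∃ s ∈ P, ¬IsSectionAt s u 1}

/-- The images of `v` under those `g` in the group generated by `P` whose section at `v` is a
product of `k` elements of `P`. -/
def reachedWords (P : Set (Perm (List X))) (v : List X) (k : ℕ) : Set (List X) :=
  {u | ∃ g ∈ Subgroup.closure P, g v = u ∧ ∃ h ∈ P ^ k, IsSectionAt g v h}

namespace IsSelfSimilar

variable {P : Set (Perm (List X))}

theorem closure_le_treeAut (hP : IsSelfSimilar P) : Subgroup.closure P ≤ treeAut X :=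
  (Subgroup.closure_le _).2 hP.subset_treeAut

theorem closure_induction_left (hP : IsSelfSimilar P) {p : Perm (List X) → Prop} (one : p 1)
    (mul_left : ∀ s ∈ P, ∀ g ∈ Subgroup.closure P, p g → p (s * g)) :
    ∀ g ∈ Subgroup.closure P, p g := fun _ =>
  Subgroup.closure_induction_left (p := fun g _ => p g) one mul_left
    fun s hs => mul_left s⁻¹ (hP.inv_mem s hs)

/-- Schreier's lemma for sections: `B` contains the sections at `v` of a system of coset
representatives of the stabilizer of `v`. -/
theorem stabilizerSections_eq_closure (hP : IsSelfSimilar P) {B : Set (Perm (List X))}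
    (hB : 1 ∈ B) {v : List X}
    (hrep : ∀ g ∈ Subgroup.closure P,
      ∃ r ∈ Subgroup.closure P, r v = g v ∧ ∃ b ∈ B, IsSectionAt r v b) :
    stabilizerSections (Subgroup.closure P) v =
      Subgroup.closure (↑(stabilizerSections (Subgroup.closure P) v) ∩ (B⁻¹ * P * B)) := by
  set G := Subgroup.closure P
  set K := Subgroup.closure (↑(stabilizerSections G v) ∩ (B⁻¹ * P * B))
  refine le_antisymm ?_ ((Subgroup.closure_le _).2 Set.inter_subset_left)
  have schreier_mem {s r r' c b b' : Perm (List X)} (hs : s ∈ P) (hr : r ∈ G) (hr' : r' ∈ G)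
      (hrv : r v = s (r' v)) (hc : IsSectionAt s (r' v) c) (hbB : b ∈ B) (hb : IsSectionAt r v b)
      (hbB' : b' ∈ B) (hb' : IsSectionAt r' v b') : b⁻¹ * c * b' ∈ K := by
    refine Subgroup.subset_closure ⟨⟨r⁻¹ * s * r', ?_, ?_, ?_⟩, ?_⟩
    · exact mul_mem (mul_mem (inv_mem hr) (Subgroup.subset_closure hs)) hr'
    · simp only [Perm.mul_apply, ← hrv, Perm.coe_inv, Equiv.symm_apply_apply]
    · exact ((hrv ▸ hb.inv : IsSectionAt r⁻¹ (s (r' v)) b⁻¹).mul hc).mul hb'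
    · exact Set.mul_mem_mul (Set.mul_mem_mul (Set.inv_mem_inv.2 hbB)
        (hP.section_mem s hs _ c hc)) hbB'
  have coset_mem : ∀ g ∈ G, ∀ h, IsSectionAt g v h → ∀ r ∈ G, r v = g v →
      ∀ b ∈ B, IsSectionAt r v b → b⁻¹ * h ∈ K := by
    refine hP.closure_induction_left (fun h hh r hr hrv b hbB hb => ?_)
      fun s hs g hg ih h hh r hr hrv b hbB hb => ?_
    · rw [hh.unique (.one v)]
      exact schreier_mem hP.one_mem hr (one_mem G) hrv (.one v) hbB hb hB (.one v)
    · obtain ⟨k, hk⟩ := treeAut.exists_isSectionAt (hP.closure_le_treeAut hg) v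
      obtain ⟨c, hc⟩ := treeAut.exists_isSectionAt (hP.subset_treeAut hs) (g v)
      obtain ⟨r', hr', hrv', b', hbB', hb'⟩ := hrep g hg
      have hsplit : b⁻¹ * h = b⁻¹ * c * b' * (b'⁻¹ * k) := by
        rw [hh.unique (hc.mul hk)]; group
      rw [hsplit]
      refine mul_mem (schreier_mem hs hr hr' ?_ ?_ hbB hb hbB' hb')
        (ih k hk r' hr' hrv' b' hbB' hb')
      · rw [hrv, hrv', Perm.mul_apply]
      · rwa [hrv']
  rintro h ⟨g, hg, hgv, hh⟩
  simpa using coset_mem g hg h hh 1 (one_mem G) hgv.symm 1 hB (.one v)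

theorem reachedWords_mono (hP : IsSelfSimilar P) (v : List X) : Monotone (reachedWords P v) := by
  rintro k l hkl u ⟨g, hg, hgv, h, hh, hs⟩
  exact ⟨g, hg, hgv, h, Set.pow_subset_pow_right hP.one_mem hkl hh, hs⟩

theorem self_mem_reachedWords (hP : IsSelfSimilar P) (v : List X) (k : ℕ) :
    v ∈ reachedWords P v k :=
  ⟨1, one_mem _, rfl, 1, Set.one_mem_pow hP.one_mem, .one v⟩

theorem map_mem_reachedWords_succ (hP : IsSelfSimilar P) {s : Perm (List X)} (hs : s ∈ P)
    {u v : List X} {k : ℕ} (hu : u ∈ reachedWords P v k) : s u ∈ reachedWords P v (k + 1) := by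
  obtain ⟨g, hg, rfl, h, hh, hsec⟩ := hu
  obtain ⟨c, hc⟩ := treeAut.exists_isSectionAt (hP.subset_treeAut hs) (g v)
  refine ⟨s * g, mul_mem (Subgroup.subset_closure hs) hg, rfl, c * h, ?_, hc.mul hsec⟩
  rw [pow_succ']
  exact Set.mul_mem_mul (hP.section_mem s hs _ c hc) hh

theorem map_mem_reachedWords_of_isSectionAt_one {s : Perm (List X)} (hs : s ∈ P) {u v : List X}
    {k : ℕ} (hu : u ∈ reachedWords P v k) (htriv : IsSectionAt s u 1) :
    s u ∈ reachedWords P v k := by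
  obtain ⟨g, hg, rfl, h, hh, hsec⟩ := hu
  exact ⟨s * g, mul_mem (Subgroup.subset_closure hs) hg, rfl, 1 * h, by rwa [one_mul],
    htriv.mul hsec⟩

/-- An edge leaving the `k`-th set of reached words has a non-trivial section, and its endpoint
is a newly reached active word. -/
theorem map_mem_reachedWords_of_inter_activeWords (hP : IsSelfSimilar P) {v : List X} {k : ℕ}
    (hstab : reachedWords P v (k + 1) ∩ activeWords P v.length ⊆ reachedWords P v k)
    {s : Perm (List X)} (hs : s ∈ P) {u : List X} (hu : u ∈ reachedWords P v k) :
    s u ∈ reachedWords P v k := by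
  by_cases htriv : IsSectionAt s u 1
  · exact map_mem_reachedWords_of_isSectionAt_one hs hu htriv
  have hactive : s u ∈ activeWords P v.length := by
    obtain ⟨g, hg, rfl, -⟩ := hu
    refine ⟨?_, s⁻¹, hP.inv_mem s hs, fun hinv => htriv ?_⟩
    · rw [treeAut.length_map (hP.subset_treeAut hs), treeAut.length_map (hP.closure_le_treeAut hg)]
    · simpa using hinv.inv
  exact hstab ⟨hP.map_mem_reachedWords_succ hs hu, hactive⟩

theorem map_mem_reachedWords_of_encard_le (hP : IsSelfSimilar P) {v : List X} {N : ℕ}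
    (hN : (activeWords P v.length).encard ≤ N) :
    ∀ g ∈ Subgroup.closure P, g v ∈ reachedWords P v N := by
  obtain ⟨hfin, hcard⟩ := Set.encard_le_coe_iff_finite_ncard_le.1 hN
  let D : ℕ → Set (List X) := fun k => reachedWords P v k ∩ activeWords P v.length
  have hDfin (k : ℕ) : (D k).Finite := hfin.inter_of_right _
  have hDmono : Monotone D := fun k l hkl =>
    Set.inter_subset_inter_left _ (hP.reachedWords_mono v hkl)
  have orbit_of_stable {k : ℕ} (hk : (D k).ncard = (D (k + 1)).ncard) :
      ∀ g ∈ Subgroup.closure P, g v ∈ reachedWords P v k := by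
    have hD : D k = D (k + 1) :=
      Set.eq_of_subset_of_ncard_le (hDmono k.le_succ) hk.ge (hDfin (k + 1))
    exact hP.closure_induction_left (hP.self_mem_reachedWords v k) fun s hs g _ hgv =>
      hP.map_mem_reachedWords_of_inter_activeWords (hD.ge.trans Set.inter_subset_left) hs hgv
  refine orbit_of_stable (Nat.stabilises_of_monotone (f := fun k => (D k).ncard) (b := N)
    (fun k l hkl => Set.ncard_le_ncard (hDmono hkl) (hDfin l))
    (fun k => (Set.ncard_le_ncard Set.inter_subset_right hfin).trans hcard)
    (fun k hk => ?_) N.le_succ).symm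
  have hsub : D (k + 2) ⊆ D (k + 1) := by
    rintro _ ⟨⟨g, hg, rfl, -⟩, hactive⟩
    exact ⟨hP.reachedWords_mono v k.le_succ (orbit_of_stable hk g hg), hactive⟩
  rw [(hDmono (k + 1).le_succ).antisymm hsub]

theorem finite_range_stabilizerSections (hP : IsSelfSimilar P) (hfin : P.Finite) {N : ℕ}
    (hN : ∀ n, (activeWords P n).encard ≤ N) :
    (Set.range (stabilizerSections (Subgroup.closure P))).Finite := by
  have hpow (k : ℕ) : (P ^ k).Finite := by
    induction k with
    | zero => rw [pow_zero]; exact Set.finite_one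
    | succ k ih => rw [pow_succ]; exact ih.mul hfin
  have hBfin : ((P ^ N)⁻¹ * P * P ^ N).Finite :=
    ((hpow N).inv.mul hfin).mul (hpow N)
  refine (hBfin.finite_subsets.image Subgroup.closure).subset ?_
  rintro _ ⟨v, rfl⟩
  refine ⟨_, Set.inter_subset_right, (hP.stabilizerSections_eq_closure
    (Set.one_mem_pow hP.one_mem) fun g hg => ?_).symm⟩
  exact hP.map_mem_reachedWords_of_encard_le (hN v.length) g hg

end IsSelfSimilar

end SelfSimilar

namespace Mealy

variable {S X : Type*} {A : Mealy S X}

theorem length_act (A : Mealy S X) (s : S) (v : List X) : (A.act s v).length = v.length := by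
  induction v generalizing s with
  | nil => rfl
  | cons x v ih => simp only [act, List.length_cons, ih]

theorem act_append (A : Mealy S X) (s : S) (u v : List X) :
    A.act s (u ++ v) = A.act s u ++ A.act (A.sec s u) v := by
  induction u generalizing s with
  | nil => rfl
  | cons x u ih => simp only [List.cons_append, act, sec, ih]

theorem sec_append (A : Mealy S X) (s : S) (u v : List X) :
    A.sec s (u ++ v) = A.sec (A.sec s u) v := by
  induction u generalizing s with
  | nil => rfl
  | cons x u ih => simp only [List.cons_append, sec, ih]

theorem act_take (A : Mealy S X) (s : S) (v : List X) (n : ℕ) :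
    A.act s (v.take n) = (A.act s v).take n := by
  induction v generalizing s n with
  | nil => simp only [List.take_nil, act]
  | cons x v ih => cases n <;> simp only [List.take_zero, List.take_succ_cons, act, ih]

namespace Invertible

theorem act_injective (hInv : A.Invertible) (s : S) : Function.Injective (A.act s) := by
  intro u
  induction u generalizing s with
  | nil => intro v h; cases v <;> simp_all [act]
  | cons x u ih =>
    intro v h
    cases v with
    | nil => simp [act] at h
    | cons y v =>
      obtain ⟨hxy, huv⟩ := List.cons.inj h
      obtain rfl : x = y := (hInv s).injective hxy
      rw [ih _ huv]

theorem act_surjective (hInv : A.Invertible) (s : S) : Function.Surjective (A.act s) := by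
  intro u
  induction u generalizing s with
  | nil => exact ⟨[], rfl⟩
  | cons y u ih =>
    obtain ⟨x, hx⟩ := (hInv s).surjective y
    obtain ⟨v, hv⟩ := ih (A.step s x).2
    exact ⟨x :: v, congrArg₂ List.cons hx hv⟩

/-- The permutation of `X^*` defined by a state of an invertible automaton. -/
noncomputable def perm (hInv : A.Invertible) (s : S) : Perm (List X) :=
  Equiv.ofBijective (A.act s) ⟨hInv.act_injective s, hInv.act_surjective s⟩

theorem perm_apply (hInv : A.Invertible) (s : S) (v : List X) : hInv.perm s v = A.act s v := rfl

theorem isSectionAt_perm (hInv : A.Invertible) (s : S) (u : List X) :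
    IsSectionAt (hInv.perm s) u (hInv.perm (A.sec s u)) :=
  A.act_append s u

theorem perm_eq_one_iff (hInv : A.Invertible) {s : S} :
    hInv.perm s = 1 ↔ A.IsTrivialState s :=
  Equiv.ext_iff

/-- The permutations defined by the states, their inverses and the identity. -/
def symmetricGenerators (hInv : A.Invertible) : Set (Perm (List X)) :=
  insert 1 (Set.range hInv.perm ∪ (Set.range hInv.perm)⁻¹)

theorem finite_symmetricGenerators [Finite S] (hInv : A.Invertible) :
    hInv.symmetricGenerators.Finite :=
  ((Set.finite_range _).union (Set.finite_range _).inv).insert 1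

theorem closure_symmetricGenerators (hInv : A.Invertible) :
    Subgroup.closure hInv.symmetricGenerators = A.autGroup := by
  have hrange : Set.range hInv.perm = {f | ∃ s, ∀ v, f v = A.act s v} := by
    ext f
    exact exists_congr fun s => eq_comm.trans Equiv.ext_iff
  rw [symmetricGenerators, Subgroup.closure_insert_one, Subgroup.closure_union,
    Subgroup.closure_inv, sup_idem, hrange, autGroup]

theorem isSelfSimilar_symmetricGenerators (hInv : A.Invertible) :
    IsSelfSimilar hInv.symmetricGenerators where
  one_mem := Set.mem_insert _ _
  inv_mem := by
    rintro g (rfl | hg | hg)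
    · exact .inl inv_one
    · exact .inr (.inr (Set.inv_mem_inv.2 hg))
    · exact .inr (.inl hg)
  subset_treeAut := by
    have perm_mem (s : S) : hInv.perm s ∈ treeAut X := A.act_take s
    rintro g (rfl | ⟨s, rfl⟩ | ⟨s, hs⟩)
    · exact one_mem _
    · exact perm_mem s
    · exact inv_mem_iff.1 (hs ▸ perm_mem s)
  section_mem := by
    rintro g (rfl | ⟨s, rfl⟩ | ⟨s, hs⟩) u h hh
    · exact .inl (hh.unique (.one u))
    · exact .inr (.inl ⟨_, (hInv.isSectionAt_perm s u).unique hh⟩)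
    · exact .inr (.inr ⟨_, (hInv.isSectionAt_perm s (g u)).unique (hs ▸ hh.inv)⟩)

end Invertible

/-- The edges of level `n` of the Schreier graph with a non-trivial section. An edge is
given by its label `s` and its origin `u`, and it ends at `A.act s u`. -/
def activeEdges (A : Mealy S X) (n : ℕ) : Set (S × List X) :=
  {e | e.2.length = n ∧ ¬A.IsTrivialState (A.sec e.1 e.2)}

theorem Invertible.activeWords_symmetricGenerators_subset (hInv : A.Invertible) (n : ℕ) :
    activeWords hInv.symmetricGenerators n ⊆
      Prod.snd '' A.activeEdges n ∪ (fun e => A.act e.1 e.2) '' A.activeEdges n := by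
  have mem_activeEdges {s : S} {u : List X} (hu : u.length = n)
      (hs : ¬IsSectionAt (hInv.perm s) u 1) : (s, u) ∈ A.activeEdges n := by
    refine ⟨hu, fun htriv => hs ?_⟩
    rw [← hInv.perm_eq_one_iff.2 htriv]
    exact hInv.isSectionAt_perm s u
  rintro u ⟨hu, g, rfl | ⟨s, rfl⟩ | ⟨s, hs⟩, hg⟩
  · exact absurd (.one u) hg
  · exact .inl ⟨(s, u), mem_activeEdges hu hg, rfl⟩
  · have hact : A.act s (g u) = u := by
      rw [← hInv.perm_apply, hs, Perm.coe_inv, Equiv.symm_apply_apply]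
    refine .inr ⟨(s, g u), mem_activeEdges ?_ fun htriv => hg ?_, hact⟩
    · rw [← A.length_act s, hact, hu]
    · simpa [hs] using htriv.inv

/-- A left-infinite path `… → σ 1 → σ 0` with input labels `…x₂x₁`, where `p n` labels the edge
into `σ n`. -/
def IsLeftPath (A : Mealy S X) (σ : ℕ → S) (p : ℕ → X) : Prop :=
  ∀ n, (A.step (σ (n + 1)) (p n)).2 = σ n

theorem IsLeftPath.isPostCritical {σ : ℕ → S} {p : ℕ → X} (hσ : A.IsLeftPath σ p)
    (hnt : ¬A.IsTrivialState (σ 0)) : A.IsPostCritical p :=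
  ⟨σ, p, fun n => (A.step (σ (n + 1)) (p n)).1, fun n => Prod.ext rfl (hσ n), hnt, .inl rfl⟩

theorem lsuffix_succ (p : ℕ → X) (n : ℕ) :
    lsuffix p (n + 1) = lsuffix (fun k => p (k + 1)) n ++ [p 0] := by
  simp [lsuffix, List.range_succ_eq_map, Function.comp_def]

theorem IsLeftPath.exists_extend {σ : ℕ → S} {p : ℕ → X} (hσ : A.IsLeftPath σ p) (u : List X) :
    ∃ σ' p', A.IsLeftPath σ' p' ∧ σ' 0 = A.sec (σ 0) u ∧ lsuffix p' u.length = u := by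
  induction u using List.reverseRecOn with
  | nil => exact ⟨σ, p, hσ, rfl, rfl⟩
  | append_singleton u x ih =>
    obtain ⟨σ', p', hσ', hend, hsuffix⟩ := ih
    refine ⟨fun | 0 => A.sec (σ 0) (u ++ [x]) | n + 1 => σ' n, fun | 0 => x | n + 1 => p' n,
      ?_, rfl, ?_⟩
    · rintro (_ | n)
      · simp only [hend, sec_append, sec]
      · exact hσ' n
    · rw [List.length_append, List.length_singleton, lsuffix_succ]
      exact congrArg (· ++ [x]) hsuffix

/-- The states at the end of a path of length `k`. -/
def statesAtDepth (A : Mealy S X) (k : ℕ) : Set S := {t | ∃ s u, u.length = k ∧ A.sec s u = t}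

theorem statesAtDepth_antitone (A : Mealy S X) : Antitone A.statesAtDepth := by
  refine antitone_nat_of_succ_le fun k => ?_
  rintro t ⟨s, _ | ⟨x, u⟩, hu, ht⟩
  · simp at hu
  · exact ⟨(A.step s x).2, u, by simpa using hu, ht⟩

theorem exists_step_eq_of_mem_statesAtDepth_succ {k : ℕ} {t : S}
    (ht : t ∈ A.statesAtDepth (k + 1)) : ∃ s ∈ A.statesAtDepth k, ∃ x, (A.step s x).2 = t := by
  obtain ⟨s, u, hu, ht⟩ := ht
  obtain rfl | ⟨u, x, rfl⟩ := List.eq_nil_or_concat' u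
  · simp at hu
  · exact ⟨A.sec s u, ⟨s, u, by simpa using hu, rfl⟩, x, by simpa only [sec_append, sec] using ht⟩

theorem exists_isLeftPath_of_statesAtDepth_eq {k : ℕ}
    (hk : A.statesAtDepth k = A.statesAtDepth (k + 1)) {t : S} (ht : t ∈ A.statesAtDepth k) :
    ∃ σ p, A.IsLeftPath σ p ∧ σ 0 = t := by
  have exists_pred (t : A.statesAtDepth k) : ∃ s : A.statesAtDepth k, ∃ x, (A.step s x).2 = t := by
    obtain ⟨s, hs, x, hx⟩ := exists_step_eq_of_mem_statesAtDepth_succ (hk.subset t.2)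
    exact ⟨⟨s, hs⟩, x, hx⟩
  choose pred letter hstep using exists_pred
  refine ⟨fun n => pred^[n] ⟨t, ht⟩, fun n => letter (pred^[n] ⟨t, ht⟩), fun n => ?_, rfl⟩
  simp only [Function.iterate_succ_apply', hstep]

theorem exists_forall_mem_statesAtDepth_isLeftPath [Finite S] (A : Mealy S X) :
    ∃ k, ∀ t ∈ A.statesAtDepth k, ∃ σ p, A.IsLeftPath σ p ∧ σ 0 = t := by
  obtain ⟨k, hk⟩ := WellFoundedLT.antitone_chain_condition A.statesAtDepth_antitone
  exact ⟨k, fun t ht => exists_isLeftPath_of_statesAtDepth_eq (hk (k + 1) k.le_succ) ht⟩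

theorem exists_forall_activeEdges_subset [Finite S] (A : Mealy S X) :
    ∃ k, ∀ n, A.activeEdges n ⊆ Set.univ ×ˢ {u | u.length ≤ k} ∪
      (fun c : S × List X × (ℕ → X) => (c.1, c.2.1 ++ lsuffix c.2.2 (n - k))) ''
        (Set.univ ×ˢ {u | u.length ≤ k} ×ˢ A.PostCriticalSet) := by
  obtain ⟨k, hk⟩ := A.exists_forall_mem_statesAtDepth_isLeftPath
  refine ⟨k, fun n => ?_⟩
  rintro ⟨s, u⟩ ⟨rfl, hnt⟩
  rcases le_total u.length k with hu | hu
  · exact .inl ⟨trivial, hu⟩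
  obtain ⟨σ, p, hσ, hσ0⟩ := hk (A.sec s (u.take k)) ⟨s, u.take k, by simpa using hu, rfl⟩
  obtain ⟨σ', p', hσ', hend, hsuffix⟩ := hσ.exists_extend (u.drop k)
  rw [hσ0, ← sec_append, List.take_append_drop] at hend
  refine .inr ⟨(s, u.take k, p'), ⟨trivial, by simp, hσ'.isPostCritical (hend ▸ hnt)⟩, ?_⟩
  rw [List.length_drop] at hsuffix
  simp only [hsuffix, List.take_append_drop]

theorem Bounded.exists_encard_activeEdges_le [Finite S] [Finite X] (hBdd : A.Bounded) :
    ∃ N : ℕ, ∀ n, (A.activeEdges n).encard ≤ N := by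
  obtain ⟨k, hk⟩ := A.exists_forall_activeEdges_subset
  have hshort := (Set.finite_univ (α := S)).prod (List.finite_length_le X k)
  have hlong := (Set.finite_univ (α := S)).prod ((List.finite_length_le X k).prod hBdd)
  refine ⟨hshort.toFinset.card + hlong.toFinset.card, fun n => ?_⟩
  rw [ENat.natCast_add, ← hshort.encard_eq_coe_toFinset_card, ← hlong.encard_eq_coe_toFinset_card]
  calc (A.activeEdges n).encard
      ≤ _ := Set.encard_le_encard (hk n)
    _ ≤ _ := Set.encard_union_le _ _
    _ ≤ _ := add_le_add le_rfl (Set.encard_image_le _ _)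

theorem Invertible.exists_encard_activeWords_le [Finite S] [Finite X] (hInv : A.Invertible)
    (hBdd : A.Bounded) :
    ∃ N : ℕ, ∀ n, (activeWords hInv.symmetricGenerators n).encard ≤ N := by
  obtain ⟨N, hN⟩ := hBdd.exists_encard_activeEdges_le
  refine ⟨N + N, fun n => ?_⟩
  calc (activeWords hInv.symmetricGenerators n).encard
      ≤ _ := Set.encard_le_encard (hInv.activeWords_symmetricGenerators_subset n)
    _ ≤ _ := Set.encard_union_le _ _
    _ ≤ (A.activeEdges n).encard + (A.activeEdges n).encard :=
      add_le_add (Set.encard_image_le _ _) (Set.encard_image_le _ _)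
    _ ≤ (N + N : ℕ) := by
      rw [ENat.natCast_add]
      exact add_le_add (hN n) (hN n)

theorem orbitOmega_eq_image (A : Mealy S X) (w : ℕ → X) :
    A.orbitOmega w = (fun g : Perm (List X) => extOmega g w) '' A.autGroup :=
  Set.ext fun _ => exists_congr fun _ => and_congr_right fun _ => eq_comm

end Mealy

/-- For a bounded invertible Mealy automaton `A` there is a deterministic
finite-state acceptor such that a right-infinite sequence `w` has a finite `G_A`-orbit
iff the run of the acceptor on `w` visits accepting states only finitely often. -/
theorem orbit_acceptor {S X : Type*} [Fintype S] [Fintype X]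
    (hX : 2 ≤ Fintype.card X) (A : Mealy S X)
    (hInv : A.Invertible) (hBdd : A.Bounded) :
    ∃ (Q : Type) (_ : Fintype Q) (δ : Q → X → Q) (q₀ : Q) (F : Set Q),
      ∀ w : ℕ → X,
        (A.orbitOmega w).Finite ↔ { n : ℕ | dfaRun δ q₀ w n ∈ F }.Finite := by
  have hP := hInv.isSelfSimilar_symmetricGenerators
  have hG : A.autGroup ≤ treeAut X := hInv.closure_symmetricGenerators ▸ hP.closure_le_treeAut
  obtain ⟨N, hN⟩ := hInv.exists_encard_activeWords_le hBdd
  have hfin : (Set.range (stabilizerSections A.autGroup)).Finite :=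
    hInv.closure_symmetricGenerators ▸
      hP.finite_range_stabilizerSections hInv.finite_symmetricGenerators hN
  obtain ⟨Q, hQ, δ, q₀, F, hF⟩ := exists_acceptor_of_finite_range_stabilizerSections hG hfin
  refine ⟨Q, hQ, δ, q₀, F, fun w => ?_⟩
  rw [A.orbitOmega_eq_image, finite_image_extOmega_iff hG, hF]
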